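/- arXiv:2604.04041 — 4 statements merged into one kernel-verified Lean document; each statement's English description precedes it below -/
import Mathlib

section
/- If R ∈ SO(3) satisfies sk(R) = 0 (i.e., R is symmetric) and φ(R) < 2, then R = I₃. In other words, the identity is the only symmetric rotation matrix whose attitude error φ is strictly less than 2. -/
noncomputable section
open Matrix

abbrev M3 : Type := Matrix (Fin 3) (Fin 3) ℝ

/-- `SO(3)`: real 3×3 matrices with `RᵀR = I` and `det R = 1`. -/
def SO3 (R : M3) : Prop := Rᵀ * R = 1 ∧ R.det = 1

/-- Attitude error function `φ(R) = (1/2)·tr(I₃ − R)`. -/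
def phi (R : M3) : ℝ := (1 / 2) * ((1 : M3) - R).trace

/-- Skew-symmetric projection `sk(A) = (A − Aᵀ)/2`. -/
def sk (A : M3) : M3 := (1 / 2 : ℝ) • (A - Aᵀ)

/-- The identity is the only symmetric rotation matrix whose attitude error `φ`
is strictly less than `2`. -/
theorem symm_rotation_phi_lt_two_eq_id (R : M3) (hR : SO3 R)
    (hsk : sk R = 0) (hphi : phi R < 2) : R = 1 := by
  obtain ⟨h1, hdet⟩ := hR
  have hs : Rᵀ = R := by
    unfold sk at hsk
    rcases smul_eq_zero.mp hsk with h | h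
    · norm_num at h
    · exact (sub_eq_zero.mp h).symm
  rw [hs] at h1
  have hadj : R.adjugate = R := by
    calc R.adjugate = R.adjugate * (R * R) := by rw [h1, mul_one]
      _ = R := by rw [← mul_assoc, adjugate_mul, hdet, one_smul, one_mul]
  have e (i j) : R j i = R i j := congrFun (congrFun hs i) j
  have m (i j) := congrFun (congrFun h1 i) j
  have a (i j) := congrFun (congrFun hadj i) j
  have m0 := m 0 0
  have m1 := m 1 1
  have m2 := m 2 2
  have a0 := a 0 0
  have a1 := a 1 1
  have a2 := a 2 2
  simp [Matrix.mul_apply, Fin.sum_univ_three] at m0 m1 m2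
  simp [adjugate_fin_three] at a0 a1 a2
  simp [phi, Matrix.trace, Fin.sum_univ_three] at hphi
  rw [e 0 1, e 0 2] at *
  rw [e 1 2] at *
  generalize h00 : R 0 0 = x at *
  generalize h11 : R 1 1 = y at *
  generalize h22 : R 2 2 = z at *
  generalize h01 : R 0 1 = b at *
  generalize h02 : R 0 2 = c at *
  generalize h12 : R 1 2 = d at *
  have ht : (x + y + z - 3) * (x + y + z + 1) = 0 := by
    linear_combination m0 + m1 + m2 + 2 * a0 + 2 * a1 + 2 * a2
  have ht3 : x + y + z = 3 := by
    rcases mul_eq_zero.mp ht with h | h <;> linarith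
  have hx : x = 1 := by nlinarith [sq_nonneg (x-1), sq_nonneg (y-1), sq_nonneg (z-1), sq_nonneg b, sq_nonneg c, sq_nonneg d]
  have hy : y = 1 := by nlinarith [sq_nonneg (x-1), sq_nonneg (y-1), sq_nonneg (z-1), sq_nonneg b, sq_nonneg c, sq_nonneg d]
  have hz : z = 1 := by linarith
  subst hx hy hz
  have hb : b = 0 := by nlinarith [sq_nonneg b, sq_nonneg c]
  have hc : c = 0 := by nlinarith [sq_nonneg b, sq_nonneg c]
  have hd : d = 0 := by nlinarith [sq_nonneg b, sq_nonneg d]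
  have h10 := e 0 1
  have h20 := e 0 2
  have h21 := e 1 2
  ext i j
  fin_cases i <;> fin_cases j <;> simp [*]
end
end

section
/- Let I ⊆ ℝ be an interval and let R, R_g : I → SO(3) be differentiable curves such that Ṙ(t) = R(t)·ω̂(t) for some ω : I → ℝ³. Set R_e(t) := R(t)ᵀR_g(t). Then for all t ∈ I, (d/dt) φ(R_e(t)) = −ω(t)ᵀ·sk(R_e(t))∨ − (1/2)·tr(R(t)ᵀ·Ṙ_g(t)). -/
noncomputable section
open Matrix

abbrev V3 : Type := Fin 3 → ℝ

/-- Hat map: `x̂ y = x × y`. -/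
def hat (x : V3) : M3 := !![0, -x 2, x 1; x 2, 0, -x 0; -x 1, x 0, 0]

/-- Vee map: the vector associated with a skew-symmetric matrix. -/
def vee (S : M3) : V3 := ![S 2 1, S 0 2, S 1 0]

/-- Dot product on ℝ³. -/
def dotp (v w : V3) : ℝ := ∑ i, v i * w i

/-- Derivative of the attitude error along differentiable curves on `SO(3)`:
if `Ṙ = R ω̂` on an interval `I`, then for `R_e = RᵀR_g`,
`(d/dt) φ(R_e) = −ωᵀ·sk(R_e)∨ − (1/2)·tr(Rᵀ Ṙ_g)` on `I`. -/
theorem deriv_phi_error (I : Set ℝ) (hI : I.OrdConnected)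
    (R Rg Rg' : ℝ → M3) (ω : ℝ → V3)
    (hSO : ∀ t ∈ I, SO3 (R t) ∧ SO3 (Rg t))
    (hR : ∀ t ∈ I, ∀ i j, HasDerivAt (fun s => R s i j) ((R t * hat (ω t)) i j) t)
    (hRg : ∀ t ∈ I, ∀ i j, HasDerivAt (fun s => Rg s i j) (Rg' t i j) t) :
    ∀ t ∈ I, HasDerivAt (fun s => phi ((R s)ᵀ * Rg s))
      (-(dotp (ω t) (vee (sk ((R t)ᵀ * Rg t)))) - (1 / 2) * ((R t)ᵀ * Rg' t).trace) t := by
  intro t ht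
  have h : ∀ i j, HasDerivAt (fun s => R s i j * Rg s i j)
      ((R t * hat (ω t)) i j * Rg t i j + R t i j * Rg' t i j) t :=
    fun i j => (hR t ht i j).mul (hRg t ht i j)
  have hs : HasDerivAt (fun s => ∑ i, ∑ j, R s i j * Rg s i j)
      (∑ i, ∑ j, ((R t * hat (ω t)) i j * Rg t i j + R t i j * Rg' t i j)) t :=
    HasDerivAt.fun_sum fun i _ => HasDerivAt.fun_sum fun j _ => h i j
  have hf := (hs.const_sub 3).const_mul (1 / 2 : ℝ)
  refine (hf.congr_deriv ?_).congr_of_eventuallyEq (Filter.Eventually.of_forall fun s => ?_)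
  · simp [dotp, vee, sk, hat, Matrix.trace, Matrix.mul_apply, Fin.sum_univ_three]
    ring
  · simp [phi, Matrix.trace, Matrix.mul_apply, Fin.sum_univ_three]
    ring
end
end

section
/- Let R_g ∈ SO(3) be a constant reference and let (R(t), ω(t)) be a solution on [0, ∞) of the rigid-body closed-loop system with this constant reference. If the initial Lyapunov value satisfies V(0) := (1/2)·ω(0)ᵀJω(0) + k_p·φ(R(0)ᵀR_g) < 2·k_p, then R(t) → R_g and ω(t) → 0 as t → ∞. -/
noncomputable section
open Matrix Filter

/-- PD control law `τ = k_p·sk(RᵀR_g)∨ − k_d·ω`. -/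
def tauPD (kp kd : ℝ) (R Rg : M3) (ω : V3) : V3 :=
  kp • vee (sk (Rᵀ * Rg)) - kd • ω

/-! Elementary estimates in `ℝ³` and on `SO(3)`, followed by a strict Lyapunov argument. -/

lemma dotp_eq (v w : V3) : dotp v w = v 0 * w 0 + v 1 * w 1 + v 2 * w 2 := by
  simp [dotp, Fin.sum_univ_three]

lemma dotp_self_nonneg (v : V3) : 0 ≤ dotp v v := by
  rw [dotp_eq]; nlinarith [sq_nonneg (v 0), sq_nonneg (v 1), sq_nonneg (v 2)]

lemma dotp_cs (v w : V3) : dotp v w ^ 2 ≤ dotp v v * dotp w w := by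
  simp only [dotp_eq]
  nlinarith [sq_nonneg (v 0 * w 1 - v 1 * w 0), sq_nonneg (v 0 * w 2 - v 2 * w 0),
    sq_nonneg (v 1 * w 2 - v 2 * w 1)]

/-- Squared Frobenius norm. -/
def frob (A : M3) : ℝ := ∑ i, dotp (A i) (A i)

lemma frob_nonneg (A : M3) : 0 ≤ frob A := Finset.sum_nonneg fun _ _ => dotp_self_nonneg _

lemma mulVec_apply_dotp (A : M3) (v : V3) (i : Fin 3) : (A.mulVec v) i = dotp (A i) v := rfl

lemma mulVec_bound (A : M3) (v : V3) :
    dotp (A.mulVec v) (A.mulVec v) ≤ frob A * dotp v v := by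
  rw [dotp, frob, Finset.sum_mul]
  refine Finset.sum_le_sum fun i _ => ?_
  rw [mulVec_apply_dotp, ← sq]
  exact dotp_cs _ _

lemma cross_bound (a b : V3) :
    dotp (crossProduct a b) (crossProduct a b) ≤ dotp a a * dotp b b := by
  simp only [dotp_eq, cross_apply]
  simp
  nlinarith [sq_nonneg (a 0 * b 0 + a 1 * b 1 + a 2 * b 2)]

lemma dotp_cross_self (a b : V3) : dotp b (crossProduct a b) = 0 := by
  simp only [dotp_eq, cross_apply]
  simp
  ring

/-- Weighted Young inequality for vectors. -/
lemma young {x y z : ℝ} (hx : 0 ≤ x) (hy : 0 ≤ y) (h : z ^ 2 ≤ x * y) : 2 * |z| ≤ x + y := by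
  have h1 : |2 * z| ≤ |x + y| := by
    apply sq_le_sq.mp; nlinarith [sq_nonneg (x - y)]
  rw [abs_mul, abs_two, abs_of_nonneg (add_nonneg hx hy)] at h1
  exact h1

lemma posdef_lower (J : M3) (hJ : J.PosDef) :
    ∃ l > 0, ∀ v : V3, l * dotp v v ≤ dotp v (J.mulVec v) := by
  have hpos : ∀ v : V3, v ≠ 0 → 0 < dotp v (J.mulVec v) := by
    intro v hv
    have := hJ.dotProduct_mulVec_pos hv
    simpa [dotp, dotProduct] using this
  have hcont : Continuous fun v : V3 => dotp v (J.mulVec v) := by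
    unfold dotp Matrix.mulVec dotProduct; fun_prop
  have hcont2 : Continuous fun v : V3 => dotp v v := by
    unfold dotp; fun_prop
  have hc : IsCompact (Metric.sphere (0 : V3) 1) := isCompact_sphere _ _
  have hne : (Metric.sphere (0 : V3) 1).Nonempty := NormedSpace.sphere_nonempty.mpr zero_le_one
  obtain ⟨v0, hv0, hmin⟩ := hc.exists_isMinOn hne hcont.continuousOn
  obtain ⟨v1, hv1, hmax⟩ := hc.exists_isMaxOn hne hcont2.continuousOn
  have hv0ne : v0 ≠ 0 := by rintro rfl; simp at hv0
  set m := dotp v0 (J.mulVec v0)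
  set M := dotp v1 v1
  have hm : 0 < m := hpos v0 hv0ne
  have hM : 0 ≤ M := dotp_self_nonneg _
  refine ⟨m / (M + 1), by positivity, fun v => ?_⟩
  by_cases hv : v = 0
  · subst hv; simp [dotp]
  have hn : 0 < ‖v‖ := norm_pos_iff.mpr hv
  have hu : ‖v‖⁻¹ • v ∈ Metric.sphere (0 : V3) 1 := by
    simp [norm_smul, hn.ne']
  have h1 : m ≤ dotp (‖v‖⁻¹ • v) (J.mulVec (‖v‖⁻¹ • v)) := hmin hu
  have h2 : dotp (‖v‖⁻¹ • v) (‖v‖⁻¹ • v) ≤ M := hmax hu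
  have e1 : dotp (‖v‖⁻¹ • v) (J.mulVec (‖v‖⁻¹ • v)) = (‖v‖⁻¹) ^ 2 * dotp v (J.mulVec v) := by
    rw [Matrix.mulVec_smul]; simp only [dotp_eq, Pi.smul_apply, smul_eq_mul]; ring
  have e2 : dotp (‖v‖⁻¹ • v) (‖v‖⁻¹ • v) = (‖v‖⁻¹) ^ 2 * dotp v v := by
    simp only [dotp_eq, Pi.smul_apply, smul_eq_mul]; ring
  rw [e1] at h1
  rw [e2] at h2
  have hk : 0 < (‖v‖⁻¹) ^ 2 := by positivity
  have h3 : (‖v‖⁻¹) ^ 2 * (m * dotp v v) ≤ (‖v‖⁻¹) ^ 2 * (dotp v (J.mulVec v) * (M + 1)) := by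
    nlinarith [mul_le_mul_of_nonneg_left h2 hm.le, mul_le_mul_of_nonneg_right h1 (by linarith : 0 ≤ M + 1)]
  have h4 := le_of_mul_le_mul_left h3 hk
  rw [div_mul_eq_mul_div, div_le_iff₀ (by linarith)]
  exact h4

lemma SO3.err {R Rg : M3} (h : SO3 R) (hg : SO3 Rg) : SO3 (Rᵀ * Rg) := by
  refine ⟨?_, ?_⟩
  · have : R * Rᵀ = 1 := mul_eq_one_comm.mp h.1
    rw [transpose_mul, transpose_transpose, Matrix.mul_assoc, ← Matrix.mul_assoc R, this,
      Matrix.one_mul, hg.1]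
  · rw [det_mul, det_transpose, h.2, hg.2, one_mul]

/-- The attitude error vector. -/
def ev (E : M3) : V3 := vee (sk E)

lemma SO3.frob_eq {E : M3} (h : SO3 E) : frob E = 3 := by
  have h1 := congrArg Matrix.trace h.1
  simp [Matrix.trace, Fin.sum_univ_three, Matrix.mul_apply] at h1
  simp only [frob, Fin.sum_univ_three, dotp_eq]
  linarith

lemma SO3.phi_nonneg {E : M3} (h : SO3 E) : 0 ≤ phi E := by
  have h1 := h.frob_eq
  simp only [frob, Fin.sum_univ_three, dotp_eq] at h1
  simp [phi, Matrix.trace, Fin.sum_univ_three]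
  nlinarith [sq_nonneg (E 0 0 - 1), sq_nonneg (E 1 1 - 1), sq_nonneg (E 2 2 - 1),
   sq_nonneg (E 0 1), sq_nonneg (E 0 2), sq_nonneg (E 1 0), sq_nonneg (E 1 2),
   sq_nonneg (E 2 0), sq_nonneg (E 2 1)]

lemma SO3.ev_sq {E : M3} (h : SO3 E) : dotp (ev E) (ev E) = phi E * (2 - phi E) := by
  have hadj : E.adjugate = Eᵀ := by
    have h2 : E * Eᵀ = 1 := mul_eq_one_comm.mp h.1
    calc E.adjugate = E.adjugate * (E * Eᵀ) := by rw [h2, Matrix.mul_one]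
      _ = Eᵀ := by rw [← Matrix.mul_assoc, adjugate_mul, h.2, one_smul, Matrix.one_mul]
  rw [adjugate_fin_three] at hadj
  have a0 := congrFun (congrFun hadj 0) 0
  have a1 := congrFun (congrFun hadj 1) 1
  have a2 := congrFun (congrFun hadj 2) 2
  simp at a0 a1 a2
  have h1 := h.frob_eq
  simp only [frob, Fin.sum_univ_three, dotp_eq] at h1
  simp [ev, vee, sk, dotp_eq, phi, Matrix.trace, Fin.sum_univ_three]
  linear_combination (1/4) * h1 + (1/2) * (a0 + a1 + a2)

/-- Derivative of the error vector along the flow. -/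
lemma ev_deriv_bound {E : M3} (h : SO3 E) (h2 : phi E ≤ 2) (w : V3) :
    dotp (ev ((hat w)ᵀ * E)) (ev ((hat w)ᵀ * E)) ≤ 3 * dotp w w := by
  have h0 := h.phi_nonneg
  have h1 := h.frob_eq
  have key : ev ((hat w)ᵀ * E) = ((1 / 2 : ℝ) • (E - E.trace • (1 : M3))).mulVec w := by
    ext i
    fin_cases i <;>
    simp [ev, vee, sk, hat, Matrix.mul_apply, Matrix.mulVec, dotProduct, Fin.sum_univ_three,
      Matrix.trace, Matrix.one_apply] <;> ring
  rw [key]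
  refine (mulVec_bound _ _).trans ?_
  refine mul_le_mul_of_nonneg_right ?_ (dotp_self_nonneg w)
  simp only [frob, Fin.sum_univ_three, dotp_eq] at h1
  simp [phi, Matrix.trace, Fin.sum_univ_three] at h0 h2
  simp [frob, Fin.sum_univ_three, dotp_eq, Matrix.trace, Matrix.one_apply]
  have u1 : 0 ≤ 3 - (E 0 0 + E 1 1 + E 2 2) := by linarith
  have u2 : 0 ≤ 1 + (E 0 0 + E 1 1 + E 2 2) := by linarith
  nlinarith [mul_nonneg u1 u2]

lemma phi_dist {R Rg : M3} (h : SO3 R) (hg : SO3 Rg) : frob (R - Rg) = 4 * phi (Rᵀ * Rg) := by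
  have h1 := h.frob_eq
  have h2 := hg.frob_eq
  simp only [frob, Fin.sum_univ_three, dotp_eq] at h1 h2
  simp [frob, phi, dotp_eq, Matrix.trace, Fin.sum_univ_three, Matrix.mul_apply]
  linear_combination h1 + h2

lemma hasDerivAt_dotp {f g : ℝ → V3} {f' g' : V3} {t : ℝ}
    (hf : ∀ i, HasDerivAt (fun s => f s i) (f' i) t)
    (hg : ∀ i, HasDerivAt (fun s => g s i) (g' i) t) :
    HasDerivAt (fun s => dotp (f s) (g s)) (dotp f' (g t) + dotp (f t) g') t := by
  have := HasDerivAt.fun_sum (u := Finset.univ) fun i _ => (hf i).mul (hg i)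
  simp only [Finset.sum_add_distrib] at this
  exact this

lemma hasDerivAt_mulVec (J : M3) {f : ℝ → V3} {f' : V3} {t : ℝ}
    (hf : ∀ i, HasDerivAt (fun s => f s i) (f' i) t) (i : Fin 3) :
    HasDerivAt (fun s => (J.mulVec (f s)) i) ((J.mulVec f') i) t :=
  HasDerivAt.fun_sum (u := Finset.univ) fun j _ => (hf j).const_mul (J i j)

lemma antitone_of_deriv {f f' : ℝ → ℝ} (hf : ∀ t, 0 ≤ t → HasDerivAt f (f' t) t)
    (hneg : ∀ t, 0 ≤ t → f' t ≤ 0) {t : ℝ} (ht : 0 ≤ t) : f t ≤ f 0 := by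
  have : AntitoneOn f (Set.Ici 0) := by
    apply antitoneOn_of_deriv_nonpos (convex_Ici 0)
    · exact fun x hx => (hf x hx).continuousAt.continuousWithinAt
    · intro x hx
      rw [interior_Ici] at hx
      exact (hf x (le_of_lt hx)).differentiableAt.differentiableWithinAt
    · intro x hx
      rw [interior_Ici] at hx
      rw [(hf x (le_of_lt hx)).deriv]
      exact hneg x (le_of_lt hx)
  exact this (Set.mem_Ici.mpr le_rfl) ht ht

lemma exp_decay {W W' : ℝ → ℝ} {a : ℝ} (ha : 0 < a)
    (hW : ∀ t, 0 ≤ t → HasDerivAt W (W' t) t)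
    (hneg : ∀ t, 0 ≤ t → W' t ≤ -a * W t) (hpos : ∀ t, 0 ≤ t → 0 ≤ W t) :
    Tendsto W atTop (nhds 0) := by
  have hb : ∀ t, 0 ≤ t → W t ≤ W 0 * Real.exp (-(a * t)) := by
    intro t ht
    have := antitone_of_deriv (f := fun t => W t * Real.exp (a * t))
      (f' := fun t => W' t * Real.exp (a * t) + W t * (Real.exp (a * t) * (a * 1)))
      (fun s hs => (hW s hs).mul (((hasDerivAt_id s).const_mul a).exp))
      (fun s hs => by nlinarith [hneg s hs, Real.exp_pos (a * s)]) ht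
    simp at this
    rw [Real.exp_neg, ← div_eq_mul_inv, le_div_iff₀ (Real.exp_pos _)]
    exact this
  have hlim : Tendsto (fun t => W 0 * Real.exp (-(a * t))) atTop (nhds 0) := by
    have : Tendsto (fun t : ℝ => Real.exp (-(a * t))) atTop (nhds 0) :=
      Real.tendsto_exp_neg_atTop_nhds_zero.comp (tendsto_id.const_mul_atTop ha)
    simpa using this.const_mul (W 0)
  refine tendsto_of_tendsto_of_tendsto_of_le_of_le' tendsto_const_nhds hlim ?_ ?_
  · filter_upwards [eventually_ge_atTop 0] with t ht using hpos t ht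
  · filter_upwards [eventually_ge_atTop 0] with t ht using hb t ht

lemma sq_tendsto {f g : ℝ → ℝ} (h : ∀ t, 0 ≤ t → f t ^ 2 ≤ g t) (hg : Tendsto g atTop (nhds 0)) :
    Tendsto f atTop (nhds 0) := by
  have h2 : Tendsto (fun t => f t ^ 2) atTop (nhds 0) := by
    refine tendsto_of_tendsto_of_tendsto_of_le_of_le' tendsto_const_nhds hg ?_ ?_
    · filter_upwards with t using sq_nonneg _
    · filter_upwards [eventually_ge_atTop 0] with t ht using h t ht
  have h3 := h2.sqrt
  simp only [Real.sqrt_sq_eq_abs, Real.sqrt_zero] at h3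
  exact (tendsto_zero_iff_abs_tendsto_zero _).mpr h3

lemma sq_le_dotp (v : V3) (i : Fin 3) : v i ^ 2 ≤ dotp v v := by
  rw [sq]
  exact Finset.single_le_sum (f := fun i => v i * v i) (fun j _ => mul_self_nonneg _) (Finset.mem_univ i)

lemma sq_le_frob (A : M3) (i j : Fin 3) : A i j ^ 2 ≤ frob A :=
  (sq_le_dotp (A i) j).trans
    (Finset.single_le_sum (f := fun i => dotp (A i) (A i)) (fun _ _ => dotp_self_nonneg _)
      (Finset.mem_univ i))

set_option maxHeartbeats 2000000

/-- For a constant reference `R_g ∈ SO(3)` and a solution of the rigid-body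
closed-loop system on `[0,∞)` with initial Lyapunov value `V(0) < 2 k_p`,
one has `R(t) → R_g` and `ω(t) → 0` as `t → ∞`. -/
theorem asymptotic_stability_constant_reference
    (J : M3) (kp kd : ℝ) (hJ : J.PosDef) (hkp : 0 < kp) (hkd : 0 < kd)
    (Rg : M3) (hRg : SO3 Rg)
    (R : ℝ → M3) (ω ω' : ℝ → V3)
    (hRSO : ∀ t ∈ Set.Ici (0 : ℝ), SO3 (R t))
    (hR : ∀ t ∈ Set.Ici (0 : ℝ), ∀ i j,
      HasDerivAt (fun s => R s i j) ((R t * hat (ω t)) i j) t)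
    (hω : ∀ t ∈ Set.Ici (0 : ℝ), ∀ i, HasDerivAt (fun s => ω s i) (ω' t i) t)
    (hdyn : ∀ t ∈ Set.Ici (0 : ℝ), J.mulVec (ω' t) =
      crossProduct (J.mulVec (ω t)) (ω t) + tauPD kp kd (R t) Rg (ω t))
    (hV0 : (1 / 2) * dotp (ω 0) (J.mulVec (ω 0)) + kp * phi ((R 0)ᵀ * Rg) < 2 * kp) :
    Tendsto R atTop (nhds Rg) ∧ Tendsto ω atTop (nhds 0) := by
  have hso : ∀ t, 0 ≤ t → SO3 ((R t)ᵀ * Rg) := fun t ht => (hRSO t ht).err hRg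
  have hE : ∀ t, 0 ≤ t → ∀ i j, HasDerivAt (fun s => ((R s)ᵀ * Rg) i j)
      (((hat (ω t))ᵀ * ((R t)ᵀ * Rg)) i j) t := by
    intro t ht i j
    have h1 := HasDerivAt.fun_sum (u := Finset.univ)
      fun k _ => (hR t ht k i).mul_const (Rg k j)
    rw [← Matrix.mul_assoc, ← transpose_mul]
    exact h1
  have hphi : ∀ t, 0 ≤ t → HasDerivAt (fun s => phi ((R s)ᵀ * Rg))
      (-dotp (ω t) (ev ((R t)ᵀ * Rg))) t := by
    intro t ht
    have h1 := ((((hE t ht 0 0).add (hE t ht 1 1)).add (hE t ht 2 2)).const_sub 3).const_mul (1/2)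
    refine (h1.congr_deriv ?_).congr_of_eventuallyEq (Filter.Eventually.of_forall fun s => ?_)
    · generalize (R t)ᵀ * Rg = E
      simp [ev, vee, sk, hat, dotp_eq, Matrix.mul_apply, Fin.sum_univ_three]
      ring
    · show phi ((R s)ᵀ * Rg) = _
      generalize hEs : (R s)ᵀ * Rg = E
      simp [phi, Matrix.trace, Fin.sum_univ_three, hEs]
  have hev : ∀ t, 0 ≤ t → ∀ i, HasDerivAt (fun s => ev ((R s)ᵀ * Rg) i)
      (ev ((hat (ω t))ᵀ * ((R t)ᵀ * Rg)) i) t := by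
    intro t ht i
    have key : ∀ a b, HasDerivAt (fun s => sk ((R s)ᵀ * Rg) a b)
        (sk ((hat (ω t))ᵀ * ((R t)ᵀ * Rg)) a b) t := fun a b =>
      ((hE t ht a b).sub (hE t ht b a)).const_mul (1 / 2)
    fin_cases i
    · exact key 2 1
    · exact key 0 2
    · exact key 1 0
  have hsym : ∀ v w : V3, dotp v (J.mulVec w) = dotp w (J.mulVec v) := by
    intro v w
    have h : ∀ i j, J i j = J j i := fun i j => by
      simpa using hJ.isHermitian.apply j i
    simp only [dotp_eq, mulVec_apply_dotp]
    rw [h 1 0, h 2 0, h 2 1]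
    ring
  have hq : ∀ t, 0 ≤ t → HasDerivAt (fun s => dotp (ω s) (J.mulVec (ω s)))
      (2 * (kp * dotp (ω t) (ev ((R t)ᵀ * Rg)) - kd * dotp (ω t) (ω t))) t := by
    intro t ht
    refine (hasDerivAt_dotp (hω t ht) (hasDerivAt_mulVec J (hω t ht))).congr_deriv ?_
    rw [hsym (ω' t) (ω t), hdyn t ht]
    have h0 := dotp_cross_self (J.mulVec (ω t)) (ω t)
    simp only [dotp_eq, tauPD, ev, Pi.add_apply, Pi.sub_apply, Pi.smul_apply, smul_eq_mul] at h0 ⊢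
    linear_combination 2 * h0
  have hc : ∀ t, 0 ≤ t → HasDerivAt (fun s => dotp (J.mulVec (ω s)) (ev ((R s)ᵀ * Rg)))
      (dotp (crossProduct (J.mulVec (ω t)) (ω t)) (ev ((R t)ᵀ * Rg))
        + kp * dotp (ev ((R t)ᵀ * Rg)) (ev ((R t)ᵀ * Rg))
        - kd * dotp (ω t) (ev ((R t)ᵀ * Rg))
        + dotp (J.mulVec (ω t)) (ev ((hat (ω t))ᵀ * ((R t)ᵀ * Rg)))) t := by
    intro t ht
    refine (hasDerivAt_dotp (hasDerivAt_mulVec J (hω t ht)) (hev t ht)).congr_deriv ?_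
    rw [hdyn t ht]
    simp only [dotp_eq, tauPD, ev, Pi.add_apply, Pi.sub_apply, Pi.smul_apply, smul_eq_mul]
    ring
  obtain ⟨l, hl, hlow⟩ := posdef_lower J hJ
  have hV : ∀ t, 0 ≤ t →
      (1 / 2) * dotp (ω t) (J.mulVec (ω t)) + kp * phi ((R t)ᵀ * Rg) ≤
      (1 / 2) * dotp (ω 0) (J.mulVec (ω 0)) + kp * phi ((R 0)ᵀ * Rg) := by
    intro t ht
    refine antitone_of_deriv
      (f := fun t => (1 / 2) * dotp (ω t) (J.mulVec (ω t)) + kp * phi ((R t)ᵀ * Rg))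
      (fun s hs => ((hq s hs).const_mul (1 / 2)).add ((hphi s hs).const_mul kp)) ?_ ht
    intro s _
    nlinarith [mul_nonneg hkd.le (dotp_self_nonneg (ω s))]
  obtain ⟨d, hd, hdphi⟩ : ∃ d > 0, ∀ t, 0 ≤ t → phi ((R t)ᵀ * Rg) ≤ 2 - d := by
    refine ⟨2 - ((1 / 2) * dotp (ω 0) (J.mulVec (ω 0)) + kp * phi ((R 0)ᵀ * Rg)) / kp, ?_, ?_⟩
    · rw [gt_iff_lt, sub_pos, div_lt_iff₀ hkp]; exact hV0
    · intro t ht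
      rw [sub_sub_cancel, le_div_iff₀ hkp]
      have h1 := hV t ht
      have h2 := hlow (ω t)
      have h3 := mul_nonneg hl.le (dotp_self_nonneg (ω t))
      linarith
  obtain ⟨K, hK, hKb⟩ : ∃ K, 0 ≤ K ∧ ∀ v, dotp (J.mulVec v) (J.mulVec v) ≤ K * dotp v v :=
    ⟨frob J, frob_nonneg J, mulVec_bound J⟩
  obtain ⟨M, hM, hMpos⟩ : ∃ M, M = K + 2 + kd ^ 2 / (2 * kp) ∧ 0 < M := ⟨_, rfl, by positivity⟩
  obtain ⟨ε, hε, hε1, hε2, hε3⟩ : ∃ ε > 0, ε * M ≤ kd / 2 ∧ ε * K ≤ l / 2 ∧ ε ≤ kp / 2 := by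
    refine ⟨min (kd / 2 / M) (min (l / 2 / (K + 1)) (kp / 2)), by positivity, ?_, ?_, ?_⟩
    · rw [← le_div_iff₀ hMpos]; exact min_le_left _ _
    · have h1 : min (kd / 2 / M) (min (l / 2 / (K + 1)) (kp / 2)) ≤ l / 2 / (K + 1) :=
        (min_le_right _ _).trans (min_le_left _ _)
      have h0 : 0 < min (kd / 2 / M) (min (l / 2 / (K + 1)) (kp / 2)) := by positivity
      rw [le_div_iff₀ (by linarith)] at h1
      linarith
    · exact (min_le_right _ _).trans (min_le_right _ _)
  obtain ⟨A, hA, hApos⟩ : ∃ A, A = (1 + K) / 4 + ε * K / 2 ∧ 0 < A := ⟨_, rfl, by positivity⟩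
  obtain ⟨B, hB, hBpos⟩ : ∃ B, B = kp / d + ε / 2 ∧ 0 < B := ⟨_, rfl, by positivity⟩
  obtain ⟨α, hα, hα1, hα2⟩ : ∃ α > 0, α * A ≤ kd / 2 ∧ α * B ≤ ε * kp / 2 := by
    refine ⟨min (kd / 2 / A) (ε * kp / 2 / B), by positivity, ?_, ?_⟩
    · rw [← le_div_iff₀ hApos]; exact min_le_left _ _
    · rw [← le_div_iff₀ hBpos]; exact min_le_right _ _
  -- pointwise bounds
  have hs : ∀ t, 0 ≤ t → dotp (ev ((R t)ᵀ * Rg)) (ev ((R t)ᵀ * Rg)) =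
      phi ((R t)ᵀ * Rg) * (2 - phi ((R t)ᵀ * Rg)) := fun t ht => (hso t ht).ev_sq
  have hcb : ∀ t, 2 * |dotp (J.mulVec (ω t)) (ev ((R t)ᵀ * Rg))| ≤
      K * dotp (ω t) (ω t) + dotp (ev ((R t)ᵀ * Rg)) (ev ((R t)ᵀ * Rg)) := fun t =>
    young (mul_nonneg hK (dotp_self_nonneg _)) (dotp_self_nonneg _)
      ((dotp_cs _ _).trans (mul_le_mul_of_nonneg_right (hKb _) (dotp_self_nonneg _)))
  have hWlow : ∀ t, 0 ≤ t → l / 4 * dotp (ω t) (ω t) + kp / 2 * phi ((R t)ᵀ * Rg) ≤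
      (1 / 2) * dotp (ω t) (J.mulVec (ω t)) + kp * phi ((R t)ᵀ * Rg)
        - ε * dotp (J.mulVec (ω t)) (ev ((R t)ᵀ * Rg)) := by
    intro t ht
    have h1 := hcb t
    have h2 := hlow (ω t)
    have h3 := hs t ht
    have hp := (hso t ht).phi_nonneg
    have hn := dotp_self_nonneg (ω t)
    have h4 := le_abs_self (dotp (J.mulVec (ω t)) (ev ((R t)ᵀ * Rg)))
    generalize dotp (J.mulVec (ω t)) (ev ((R t)ᵀ * Rg)) = c at *
    generalize dotp (ev ((R t)ᵀ * Rg)) (ev ((R t)ᵀ * Rg)) = s at *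
    generalize dotp (ω t) (J.mulVec (ω t)) = q at *
    generalize dotp (ω t) (ω t) = n at *
    generalize phi ((R t)ᵀ * Rg) = p at *
    have h5 : 2 * c ≤ K * n + 2 * p := by nlinarith
    have h6 := mul_le_mul_of_nonneg_left h5 hε.le
    have h7 := mul_le_mul_of_nonneg_right hε2 hn
    have h8 := mul_le_mul_of_nonneg_right hε3 hp
    nlinarith
  have hWlim : Tendsto (fun t => (1 / 2) * dotp (ω t) (J.mulVec (ω t)) + kp * phi ((R t)ᵀ * Rg)
        - ε * dotp (J.mulVec (ω t)) (ev ((R t)ᵀ * Rg))) atTop (nhds 0) := by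
    refine exp_decay hα
      (fun s hs => (((hq s hs).const_mul (1 / 2)).add ((hphi s hs).const_mul kp)).sub
        ((hc s hs).const_mul ε)) ?_ ?_
    · intro t ht
      have hp := (hso t ht).phi_nonneg
      have hp2 := hdphi t ht
      have hn := dotp_self_nonneg (ω t)
      have hs0 := dotp_self_nonneg (ev ((R t)ᵀ * Rg))
      have hst := hs t ht
      have hs1 : dotp (ev ((R t)ᵀ * Rg)) (ev ((R t)ᵀ * Rg)) ≤ 1 := by
        rw [hst]; nlinarith [sq_nonneg (phi ((R t)ᵀ * Rg) - 1)]
      have hy := hKb (ω t)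
      have hKn := mul_nonneg hK hn
      have b1 : 2 * |dotp (crossProduct (J.mulVec (ω t)) (ω t)) (ev ((R t)ᵀ * Rg))| ≤
          K * dotp (ω t) (ω t) + dotp (ω t) (ω t) := by
        refine young hKn hn ((dotp_cs _ _).trans ?_)
        calc _ ≤ dotp (crossProduct (J.mulVec (ω t)) (ω t))
                  (crossProduct (J.mulVec (ω t)) (ω t)) * 1 :=
              mul_le_mul_of_nonneg_left hs1 (dotp_self_nonneg _)
          _ ≤ _ := by
              rw [mul_one]
              exact (cross_bound _ _).trans (mul_le_mul_of_nonneg_right hy hn)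
      have b2 : 2 * |dotp (J.mulVec (ω t)) (ev ((hat (ω t))ᵀ * ((R t)ᵀ * Rg)))| ≤
          K * dotp (ω t) (ω t) + 3 * dotp (ω t) (ω t) := by
        refine young hKn (by linarith) ((dotp_cs _ _).trans ?_)
        exact mul_le_mul hy (ev_deriv_bound (hso t ht) (by linarith) _) (dotp_self_nonneg _) hKn
      have b3 : 2 * |kd * dotp (ω t) (ev ((R t)ᵀ * Rg))| ≤
          kd ^ 2 / kp * dotp (ω t) (ω t)
            + kp * dotp (ev ((R t)ᵀ * Rg)) (ev ((R t)ᵀ * Rg)) := by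
        refine young (by positivity) (by positivity) ?_
        have h1 := mul_le_mul_of_nonneg_left (dotp_cs (ω t) (ev ((R t)ᵀ * Rg))) (sq_nonneg kd)
        rw [mul_pow]
        refine h1.trans (le_of_eq ?_)
        field_simp
      have b4 := hcb t
      have b5 : 2 * |dotp (ω t) (J.mulVec (ω t))| ≤ dotp (ω t) (ω t) + K * dotp (ω t) (ω t) :=
        young hn hKn ((dotp_cs _ _).trans (mul_le_mul_of_nonneg_left hy hn))
      generalize dotp (crossProduct (J.mulVec (ω t)) (ω t)) (ev ((R t)ᵀ * Rg)) = x1 at *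
      generalize dotp (J.mulVec (ω t)) (ev ((hat (ω t))ᵀ * ((R t)ᵀ * Rg))) = x2 at *
      generalize dotp (ω t) (ev ((R t)ᵀ * Rg)) = x3 at *
      generalize dotp (J.mulVec (ω t)) (ev ((R t)ᵀ * Rg)) = c at *
      generalize dotp (ev ((R t)ᵀ * Rg)) (ev ((R t)ᵀ * Rg)) = s at *
      generalize dotp (ω t) (J.mulVec (ω t)) = q at *
      generalize dotp (ω t) (ω t) = n at *
      generalize phi ((R t)ᵀ * Rg) = p at *
      have c1 := neg_abs_le x1
      have c2 := neg_abs_le x2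
      have c3 := le_abs_self (kd * x3)
      have c4 := neg_abs_le c
      have c5 := le_abs_self q
      have hMn : M * n = K * n + 2 * n + kd ^ 2 / kp * n / 2 := by
        rw [hM]; field_simp
      have g1 : -(x1 + kp * s - kd * x3 + x2) ≤ M * n - kp * s / 2 := by linarith
      have g2 := mul_le_mul_of_nonneg_left g1 hε.le
      have g3 := mul_le_mul_of_nonneg_right hε1 hn
      have hps : kp * p ≤ kp / d * s := by
        have : d * p ≤ s := by
          rw [hst, mul_comm]; exact mul_le_mul_of_nonneg_left (by linarith) hp
        rw [div_mul_eq_mul_div, le_div_iff₀ hd]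
        have := mul_le_mul_of_nonneg_left this hkp.le
        linarith
      have g4 : -(ε * c) ≤ ε * ((K * n + s) / 2) := by
        rw [← mul_neg]; exact mul_le_mul_of_nonneg_left (by linarith) hε.le
      have g5 : 1 / 2 * q + kp * p - ε * c ≤ A * n + B * s := by
        rw [hA, hB]; linarith
      have g6 := mul_le_mul_of_nonneg_left g5 hα.le
      have g7 := mul_le_mul_of_nonneg_right hα1 hn
      have g8 := mul_le_mul_of_nonneg_right hα2 hs0
      linarith
    · intro t ht
      refine le_trans ?_ (hWlow t ht)
      have hp := (hso t ht).phi_nonneg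
      have hn := dotp_self_nonneg (ω t)
      positivity
  constructor
  · have h4 := hWlim.const_mul (8 / kp)
    rw [mul_zero] at h4
    refine tendsto_pi_nhds.mpr fun i => tendsto_pi_nhds.mpr fun j => ?_
    rw [← tendsto_sub_nhds_zero_iff]
    refine sq_tendsto (fun t ht => ?_) h4
    have h1 := sq_le_frob (R t - Rg) i j
    rw [phi_dist (hRSO t ht) hRg, Matrix.sub_apply] at h1
    refine h1.trans ?_
    have h2 := hWlow t ht
    have h3 := mul_nonneg hl.le (dotp_self_nonneg (ω t))
    rw [div_mul_eq_mul_div, le_div_iff₀ hkp]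
    linarith
  · have h4 := hWlim.const_mul (4 / l)
    rw [mul_zero] at h4
    refine tendsto_pi_nhds.mpr fun i => ?_
    refine sq_tendsto (fun t ht => ?_) h4
    refine (sq_le_dotp (ω t) i).trans ?_
    have h2 := hWlow t ht
    have h3 := mul_nonneg hkp.le (hso t ht).phi_nonneg
    rw [div_mul_eq_mul_div, le_div_iff₀ hl]
    linarith
end
end

section
/- (Robust safety margin persists over one sampling interval.) Let C > 0, c₁ > 0, c_Γ > 1, and let V, Γ : [t_k, ∞) → ℝ be differentiable with (Γ − V)'(t) ≥ −C and Γ(t) ≥ c₁ for all t ≥ t_k. If Γ(t_k) − c_Γ·V(t_k) ≥ 0, then for all t ∈ [t_k, t_k + s_#] with s_# := (c_Γ − 1)·c₁/(2·c_Γ·C), one has Γ(t) − V(t) ≥ (c_Γ − 1)·c₁/(2·c_Γ) > 0. -/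
noncomputable section

/-- Robust safety margin persists over one sampling interval: if
`(Γ − V)' ≥ −C`, `Γ ≥ c₁` on `[t_k,∞)`, and `Γ(t_k) − c_Γ·V(t_k) ≥ 0` with
`c_Γ > 1`, then for all `t ∈ [t_k, t_k + s_#]` with
`s_# = (c_Γ − 1)·c₁/(2·c_Γ·C)`, one has
`Γ(t) − V(t) ≥ (c_Γ − 1)·c₁/(2·c_Γ) > 0`. -/
theorem robust_margin_persists (tk C c₁ cΓ : ℝ)
    (hC : 0 < C) (hc₁ : 0 < c₁) (hcΓ : 1 < cΓ)
    (V Γ : ℝ → ℝ)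
    (hVd : ∀ t, tk ≤ t → DifferentiableAt ℝ V t)
    (hΓd : ∀ t, tk ≤ t → DifferentiableAt ℝ Γ t)
    (hder : ∀ t, tk ≤ t → -C ≤ deriv (fun s => Γ s - V s) t)
    (hΓlb : ∀ t, tk ≤ t → c₁ ≤ Γ t)
    (htrig : 0 ≤ Γ tk - cΓ * V tk) :
    ∀ t ∈ Set.Icc tk (tk + (cΓ - 1) * c₁ / (2 * cΓ * C)),
      (cΓ - 1) * c₁ / (2 * cΓ) ≤ Γ t - V t ∧ 0 < (cΓ - 1) * c₁ / (2 * cΓ) := by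
  intro t ht
  obtain ⟨h1, h2⟩ := ht
  have hc0 : 0 < cΓ := by linarith
  have hd : ∀ s, tk ≤ s → DifferentiableAt ℝ (fun s => Γ s - V s) s :=
    fun s hs => (hΓd s hs).sub (hVd s hs)
  have hmv := (convex_Ici tk).mul_sub_le_image_sub_of_le_deriv
    (f := fun s => Γ s - V s) (C := -C)
    (fun s hs => (hd s hs).continuousAt.continuousWithinAt)
    (fun s hs => (hd s (interior_subset hs)).differentiableWithinAt)
    (fun s hs => hder s (interior_subset hs)) tk Set.self_mem_Ici t h1 h1
  have hM : 0 < (cΓ - 1) * c₁ / (2 * cΓ) :=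
    div_pos (mul_pos (by linarith) hc₁) (by linarith)
  refine ⟨?_, hM⟩
  have hs : C * ((cΓ - 1) * c₁ / (2 * cΓ * C)) = (cΓ - 1) * c₁ / (2 * cΓ) := by
    field_simp
  have hCt : C * (t - tk) ≤ (cΓ - 1) * c₁ / (2 * cΓ) := by
    rw [← hs]
    exact mul_le_mul_of_nonneg_left (by linarith) hC.le
  have h0 : 2 * ((cΓ - 1) * c₁ / (2 * cΓ)) ≤ Γ tk - V tk := by
    have e : 2 * ((cΓ - 1) * c₁ / (2 * cΓ)) = (cΓ - 1) * c₁ / cΓ := by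
      field_simp
    rw [e, div_le_iff₀ hc0]
    nlinarith [mul_le_mul_of_nonneg_left (hΓlb tk le_rfl) (by linarith : 0 ≤ cΓ - 1)]
  linarith
end
end
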